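/- Let K be a number field with ring of integers R = 𝓞_K, and let a, d ∈ R be nonzero. Assume: (i) there exists x ∈ R with 4 ∣ (x² − a) in R; (ii) there exists m ∈ R with a ∣ (m² + d) in R; (iii) the ideal (d) of R is squarefree; (iv) for every finite place v of K, ℍ[K_v, a, −d] is a division ring if and only if v divides the ideal (d) (i.e. the quaternion algebra A = ℍ[K, a, −d] has reduced discriminant (d)). Fix such x and m, and in A = ℍ[K, a, −d] set e₁ = (x + i)/2 and e₂ = (m·i + i·j)/a. Then the R-submodule O of A spanned by {1, e₁, e₂, e₁·e₂} is an R-order in A — that is, O is a subring of A containing the image of R, is finitely generated as an R-module, and spans A over K — and O is a maximal order: every subring O′ of A containing R and O that is finitely generated as an R-module equals O. -/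

import Mathlib

open Quaternion NumberField IsDedekindDomain

/-- A ring is a division ring if it is nontrivial and every nonzero element is invertible. -/
def IsDivisionRingPred (A : Type*) [Ring A] : Prop :=
  (1 : A) ≠ 0 ∧ ∀ x : A, x ≠ 0 → IsUnit x

/-!
An element of an order has integral reduced norm. For an order `O'` containing `O`, applying this
to an element `y` of `O'` and to its translates by the basis of `O`, and polarizing, puts `y` in the
dual lattice of `O`, whose discriminant is `d²`; in fact `d • y ∈ O`. This settles the primes not
dividing `d`.

At a prime `v ∣ d` either `a` or `4c` is a unit, where `c = (m² + d) / a`. Correspondingly `e₁` or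
`e₂` generates an unramified quadratic extension, and completing squares turns the reduced norm into
`q(s, t) - ε q(u, w)`, where `q` is the norm form of that extension and `ε` is a uniformizer. By
Hensel's lemma `q` has no nontrivial zero mod `v`, for otherwise the completed quaternion algebra
would have zero divisors. Hence the two terms have valuations of opposite parity and cannot cancel,
so the integrality of the norm bounds `s, t, u, w`, and with them the coordinates of `y`.
-/

open scoped WithZero

/-! ### Binary norm forms and Hensel's lemma -/

/-- The norm form of the quadratic algebra `F[θ]` with `θ² = bθ - e`, i.e. the norm of `s + tθ`. -/
def binaryNormForm {F : Type*} [CommRing F] (b e s t : F) : F :=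
  s ^ 2 + b * s * t + e * t ^ 2

theorem map_binaryNormForm {F G : Type*} [CommRing F] [CommRing G] (f : F →+* G) (b e s t : F) :
    f (binaryNormForm b e s t) = binaryNormForm (f b) (f e) (f s) (f t) := by
  simp only [binaryNormForm, map_add, map_mul, map_pow]

section Hensel

variable {F Γ₀ : Type*} [Field F] [LinearOrderedCommGroupWithZero Γ₀] [Valued F Γ₀]

theorem isOpen_setOf_valued_le {s : F} (hs : s ≠ 0) :
    IsOpen {x : F | Valued.v x ≤ (Valued.v s : Γ₀)} := by
  simpa only [Valuation.restrict_le_iff] using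
    Valued.isOpen_closedBall F ((Valuation.ne_zero_iff Valued.v.restrict).2 hs)

variable [MulArchimedean Γ₀]

theorem isAdic_span_singleton_valued_integer {π : (Valued.v : Valuation F Γ₀).integer}
    (hπ : π ≠ 0) (hπ' : Valued.v (π : F) < 1) : IsAdic (Ideal.span {π}) := by
  simp_rw [isAdic_iff, Ideal.span_singleton_pow,
    Valuation.integer.coe_span_singleton_eq_setOfPred_le_v_coe]
  refine ⟨fun n => ?_, fun s hs => ?_⟩
  · have hπn : ((π ^ n : (Valued.v : Valuation F Γ₀).integer) : F) ≠ 0 := by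
      simpa using pow_ne_zero n (Subtype.coe_ne_coe.2 hπ)
    exact (isOpen_setOf_valued_le hπn).preimage continuous_subtype_val
  · obtain ⟨U, hU, hUs⟩ := mem_nhds_subtype _ _ _ |>.1 hs
    obtain ⟨γ, hγ⟩ := Valued.mem_nhds_zero.1 hU
    obtain ⟨n, hn⟩ := exists_pow_lt₀ hπ'
      (Units.mk0 _ (MonoidWithZeroHom.ValueGroup₀.embedding_unit_pos γ).ne')
    refine ⟨n, fun y hy => hUs (hγ ?_)⟩
    rw [Set.mem_ofPred_eq, Valuation.restrict_lt_iff_lt_embedding]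
    exact lt_of_le_of_lt (by simpa using hy) hn

variable [CompleteSpace F]

theorem isAdicComplete_span_singleton_valued_integer {π : (Valued.v : Valuation F Γ₀).integer}
    (hπ : π ≠ 0) (hπ' : Valued.v (π : F) < 1) :
    IsAdicComplete (Ideal.span {π}) (Valued.v : Valuation F Γ₀).integer := by
  have : IsUniformAddGroup (Valued.v : Valuation F Γ₀).integer :=
    inferInstanceAs (IsUniformAddGroup (Valued.v : Valuation F Γ₀).integer.toAddSubgroup)
  exact (isAdic_span_singleton_valued_integer hπ hπ').isAdicComplete_iff.2
    ⟨(Valued.isClosed_integer F).completeSpace_coe, inferInstance⟩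

open Polynomial in
theorem exists_binaryNormForm_eq_zero_of_valuation_lt_one {b e r : F} (hb : Valued.v b ≤ (1 : Γ₀))
    (he : Valued.v e ≤ (1 : Γ₀)) (hr : Valued.v r ≤ (1 : Γ₀))
    (hdisc : Valued.v (b ^ 2 - 4 * e) = (1 : Γ₀))
    (hroot : Valued.v (binaryNormForm b e r 1) < (1 : Γ₀)) : ∃ t, binaryNormForm b e t 1 = 0 := by
  lift b to (Valued.v : Valuation F Γ₀).integer using hb
  lift e to (Valued.v : Valuation F Γ₀).integer using he
  lift r to (Valued.v : Valuation F Γ₀).integer using hr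
  set f : (Valued.v : Valuation F Γ₀).integer[X] := X ^ 2 + (C b * X + C e)
  have hf : f.Monic := monic_X_pow_add (degree_linear_le.trans_lt (by norm_num))
  have hf_eval (t) : ((f.eval t : (Valued.v : Valuation F Γ₀).integer) : F) =
      binaryNormForm (b : F) e t 1 := by
    simp [f, binaryNormForm, add_assoc]
  obtain h0 | h0 := eq_or_ne (f.eval r) 0
  · exact ⟨r, by rw [← hf_eval, h0, ZeroMemClass.coe_zero]⟩
  have := isAdicComplete_span_singleton_valued_integer h0 (by rwa [hf_eval])
  have hder : IsUnit (Ideal.Quotient.mk (Ideal.span {f.eval r}) (f.derivative.eval r)) := by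
    have hunit : IsUnit (b ^ 2 - 4 * e) :=
      (Valuation.integer.integers _).isUnit_of_one' hdisc
    have hder_eval : f.derivative.eval r = 2 * r + b := by simp [f, one_add_one_eq_two]
    have hsq : f.derivative.eval r ^ 2 = (b ^ 2 - 4 * e) + 4 * f.eval r := by
      rw [hder_eval]
      simp only [f, eval_add, eval_mul, eval_pow, eval_C, eval_X]
      ring
    rw [← isUnit_pow_iff two_ne_zero, ← map_pow, hsq, map_add, map_mul,
      Ideal.Quotient.mk_singleton_self, mul_zero, add_zero]
    exact hunit.map _
  obtain ⟨t, ht, -⟩ := HenselianRing.is_henselian f hf r (Ideal.mem_span_singleton_self _) hder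
  exact ⟨t, by rw [← hf_eval, ht, ZeroMemClass.coe_zero]⟩

end Hensel

theorem IsDivisionRingPred.binaryNormForm_ne_zero {F A : Type*} [CommRing F] [Ring A] [Algebra F A]
    (hA : IsDivisionRingPred A) {b e : F} {θ : A} (hθ : θ ∉ (algebraMap F A).range)
    (hroot : θ * θ = b • θ - e • 1) (t : F) : binaryNormForm b e t 1 ≠ 0 := by
  intro ht
  have hprod : (θ + t • 1) * (θ - (b + t) • 1) = 0 := by
    calc (θ + t • 1) * (θ - (b + t) • 1)
        = θ * θ - b • θ + e • 1 - binaryNormForm b e t 1 • 1 := by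
          simp only [binaryNormForm, add_mul, mul_sub, smul_mul_assoc, mul_smul_comm, one_mul,
            mul_one]
          module
      _ = 0 := by rw [hroot, ht]; module
  have hfac : ∀ s : F, θ + s • 1 ≠ 0 := fun s h =>
    hθ ⟨-s, by rw [Algebra.algebraMap_eq_smul_one, neg_smul, eq_neg_of_add_eq_zero_left h]⟩
  refine hfac (-(b + t)) ?_
  rw [neg_smul, ← sub_eq_add_neg]
  exact (hA.2 _ (hfac t)).mul_right_eq_zero.1 hprod

section ReducedNorm

variable {R K : Type*} [CommRing R] [CommRing K] [Algebra R K] {p q : K}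

theorem isIntegral_star {y : ℍ[K,p,q]} (hy : IsIntegral R y) : IsIntegral R (star y) := by
  obtain ⟨f, hf, hfy⟩ := hy
  refine ⟨f, hf, ?_⟩
  have hstar : Polynomial.aeval (star y) f = star (Polynomial.aeval y f) := by
    simp only [Polynomial.aeval_eq_sum_range, star_sum, QuaternionAlgebra.star_smul, star_pow]
  rw [← Polynomial.aeval_def, hstar, Polynomial.aeval_def, hfy, star_zero]

theorem star_mem_adjoin (y : ℍ[K,p,q]) : star y ∈ Algebra.adjoin K {y} := by
  rw [QuaternionAlgebra.star_eq_two_re_sub]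
  exact sub_mem (Subalgebra.algebraMap_mem _ _) (Algebra.self_mem_adjoin_singleton K y)

theorem isIntegral_re_mul_star {y : ℍ[K,p,q]} (hy : IsIntegral R y) :
    IsIntegral R (y * star y).re := by
  let B := Algebra.adjoin K {y}
  let y₀ : B := ⟨y, Algebra.self_mem_adjoin_singleton K y⟩
  let z₀ : B := ⟨star y, star_mem_adjoin y⟩
  have hval : Function.Injective (B.val.restrictScalars R) := Subtype.val_injective
  have hy₀ : IsIntegral R y₀ := (isIntegral_algHom_iff _ hval).1 hy
  have hz₀ : IsIntegral R z₀ := (isIntegral_algHom_iff _ hval).1 (isIntegral_star hy)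
  have hmul : IsIntegral R (y * star y) := (isIntegral_algHom_iff _ hval).2 (hy₀.mul hz₀)
  rw [QuaternionAlgebra.mul_star_eq_coe] at hmul
  exact (isIntegral_algebraMap_iff QuaternionAlgebra.algebraMap_injective).1 hmul

end ReducedNorm

section Valuation

variable {F : Type*} [Field F]

theorem valuation_binaryNormForm {Γ₀ : Type*} [LinearOrderedCommGroupWithZero Γ₀]
    (v : Valuation F Γ₀) {b e : F} (hb : v b ≤ 1) (he : v e ≤ 1)
    (hroot : ∀ r, v r ≤ 1 → 1 ≤ v (binaryNormForm b e r 1)) (s t : F) :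
    v (binaryNormForm b e s t) = max (v s) (v t) ^ 2 := by
  obtain hst | hts := le_or_gt (v s) (v t)
  · rw [max_eq_right hst]
    obtain rfl | ht := eq_or_ne t 0
    · simp_all [binaryNormForm]
    have hr : v (s / t) ≤ 1 := by
      rw [map_div₀]; exact div_le_one_of_le₀ hst zero_le
    have hint : binaryNormForm b e (s / t) 1 ∈ v.integer := by
      simp only [binaryNormForm, one_pow, mul_one]
      exact add_mem (add_mem (pow_mem hr 2) (mul_mem hb hr)) he
    have hscale : binaryNormForm b e s t = binaryNormForm b e (s / t) 1 * t ^ 2 := by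
      simp only [binaryNormForm]; field_simp
    rw [hscale, map_mul, map_pow, le_antisymm hint (hroot _ hr), one_mul]
  · have hs : 0 < v s := zero_le.trans_lt hts
    rw [max_eq_left hts.le, binaryNormForm, add_assoc, Valuation.map_add_eq_of_lt_left, map_pow]
    rw [map_pow]
    refine v.map_add_lt ?_ ?_
    · calc v (b * s * t) = v b * (v s * v t) := by simp [mul_assoc]
        _ ≤ v s * v t := mul_le_of_le_one_left' hb
        _ < v s ^ 2 := by rw [sq]; gcongr
    · calc v (e * t ^ 2) = v e * v t ^ 2 := by simp
        _ ≤ v t ^ 2 := mul_le_of_le_one_left' he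
        _ < v s ^ 2 := by gcongr; exact zero_le

theorem sq_ne_exp_neg_one_mul_sq {S T : ℤᵐ⁰} (hT : T ≠ 0) : S ^ 2 ≠ WithZero.exp (-1) * T ^ 2 := by
  induction T using WithZero.expRecOn with
  | zero => exact absurd rfl hT
  | exp t =>
    induction S using WithZero.expRecOn with
    | zero => simp
    | exp s =>
      simp only [← WithZero.exp_nsmul, ← WithZero.exp_add, ne_eq, WithZero.exp_inj]
      lia

theorem le_one_of_exp_neg_one_mul_sq_le_one {T : ℤᵐ⁰} (hT : WithZero.exp (-1) * T ^ 2 ≤ 1) :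
    T ≤ 1 := by
  induction T using WithZero.expRecOn with
  | zero => exact zero_le
  | exp t =>
    simp only [← WithZero.exp_nsmul, ← WithZero.exp_add, ← WithZero.exp_zero, WithZero.exp_le_exp]
      at hT ⊢
    lia

theorem le_one_of_valuation_sub_le_one (v : Valuation F ℤᵐ⁰) {ε p q : F} {S T : ℤᵐ⁰}
    (hε : v ε = WithZero.exp (-1)) (hp : v p = S ^ 2) (hq : v q = T ^ 2)
    (hpq : v (p - ε * q) ≤ 1) : S ≤ 1 ∧ T ≤ 1 := by
  have hεq : v (-(ε * q)) = WithZero.exp (-1) * T ^ 2 := by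
    rw [Valuation.map_neg, map_mul, hε, hq]
  obtain rfl | hT := eq_or_ne T 0
  · obtain rfl : q = 0 := by simpa using hq
    rw [mul_zero, sub_zero, hp] at hpq
    exact ⟨(pow_le_one_iff two_ne_zero).1 hpq, zero_le⟩
  rw [sub_eq_add_neg, v.map_add_of_distinct_val, hp, hεq, max_le_iff] at hpq
  · exact ⟨(pow_le_one_iff two_ne_zero).1 hpq.1, le_one_of_exp_neg_one_mul_sq_le_one hpq.2⟩
  · rw [hp, hεq]
    exact sq_ne_exp_neg_one_mul_sq hT

end Valuation

/-! ### The reduced norm in coordinates -/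

/-- The reduced norm of `α + βe₁ + γe₂ + δe₁e₂` in the quaternion algebra `ℍ[F,a,-d]`, where
`n = (x² - a) / 4` and `c = (m² + d) / a`. -/
def quaternaryNormForm {F : Type*} [CommRing F] (x m n c α β γ δ : F) : F :=
  binaryNormForm x n α β - c * binaryNormForm x n γ δ - m * (β * γ - α * δ)

section DualLattice

variable {F : Type*} [CommRing F] {S : Subring F} {a d x m n c α β γ δ : F}

theorem mul_coordinates_mem_of_quaternaryNormForm_mem (hn : x ^ 2 - a = 4 * n)
    (hc : m ^ 2 + d = a * c) (hx : x ∈ S) (hm : m ∈ S) (hnS : n ∈ S) (hcS : c ∈ S)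
    (h : quaternaryNormForm x m n c α β γ δ ∈ S)
    (h₀ : quaternaryNormForm x m n c (α + 1) β γ δ ∈ S)
    (h₁ : quaternaryNormForm x m n c α (β + 1) γ δ ∈ S)
    (h₂ : quaternaryNormForm x m n c α β (γ + 1) δ ∈ S)
    (h₃ : quaternaryNormForm x m n c α β γ (δ + 1) ∈ S) :
    d * α ∈ S ∧ d * β ∈ S ∧ d * γ ∈ S ∧ d * δ ∈ S := by
  lift x to S using hx
  lift m to S using hm
  lift n to S using hnS
  lift c to S using hcS
  obtain ⟨b₀, hb₀⟩ : ∃ b : S, (b : F) = 2 * α + x * β + m * δ :=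
    ⟨⟨_, sub_mem (sub_mem h₀ h) S.one_mem⟩, by simp only [quaternaryNormForm, binaryNormForm]; ring⟩
  obtain ⟨b₁, hb₁⟩ : ∃ b : S, (b : F) = x * α + 2 * n * β - m * γ :=
    ⟨⟨_, sub_mem (sub_mem h₁ h) n.2⟩, by simp only [quaternaryNormForm, binaryNormForm]; ring⟩
  obtain ⟨b₂, hb₂⟩ : ∃ b : S, (b : F) = -(2 * c * γ) - c * x * δ - m * β :=
    ⟨⟨_, add_mem (sub_mem h₂ h) c.2⟩, by simp only [quaternaryNormForm, binaryNormForm]; ring⟩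
  obtain ⟨b₃, hb₃⟩ : ∃ b : S, (b : F) = m * α - c * x * γ - 2 * c * n * δ :=
    ⟨⟨_, add_mem (sub_mem h₃ h) (c * n).2⟩,
      by simp only [quaternaryNormForm, binaryNormForm, Subring.coe_mul]; ring⟩
  obtain rfl : a = x ^ 2 - 4 * n := by linear_combination -hn
  obtain rfl : d = (x ^ 2 - 4 * n) * c - m ^ 2 := by linear_combination hc
  have h_two : ((2 : S) : F) = 2 := map_ofNat S.subtype 2
  have hα : ((x ^ 2 - 4 * n) * c - m ^ 2 : F) * α =
      (-(c * (2 * n * b₀ - x * b₁) + m * b₃) : S) := by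
    push_cast; rw [h_two, hb₀, hb₁, hb₃]; ring
  have hβ : ((x ^ 2 - 4 * n) * c - m ^ 2 : F) * β = (c * (x * b₀ - 2 * b₁) + m * b₂ : S) := by
    push_cast; rw [h_two, hb₀, hb₁, hb₂]; ring
  have hγ : ((x ^ 2 - 4 * n) * c - m ^ 2 : F) * γ = (2 * n * b₂ - x * b₃ + m * b₁ : S) := by
    push_cast; rw [h_two, hb₁, hb₂, hb₃]; ring
  have hδ : ((x ^ 2 - 4 * n) * c - m ^ 2 : F) * δ = (-(x * b₂) + 2 * b₃ - m * b₀ : S) := by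
    push_cast; rw [h_two, hb₀, hb₂, hb₃]; ring
  exact ⟨hα ▸ SetLike.coe_mem _, hβ ▸ SetLike.coe_mem _, hγ ▸ SetLike.coe_mem _,
    hδ ▸ SetLike.coe_mem _⟩

end DualLattice

section Diagonalization

variable {F : Type*} [Field F] {a d x m n c : F}

theorem quaternaryNormForm_eq_of_a_ne_zero (hn : x ^ 2 - a = 4 * n) (hc : m ^ 2 + d = a * c)
    (ha : a ≠ 0) (α β γ δ : F) :
    quaternaryNormForm x m n c α β γ δ =
      binaryNormForm x n (α - m * (x * γ + 2 * n * δ) / a) (β + m * (2 * γ + x * δ) / a) -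
        d / a * binaryNormForm x n γ δ := by
  have hn' : a = x ^ 2 - 4 * n := by linear_combination -hn
  have hc' : d = a * c - m ^ 2 := by linear_combination hc
  have hdiv : d / a = c - m ^ 2 / a := by rw [hc']; field_simp
  simp only [quaternaryNormForm, binaryNormForm, hdiv]
  field_simp
  rw [hn']
  ring

theorem quaternaryNormForm_eq_of_c_ne_zero (hn : x ^ 2 - a = 4 * n) (hc : m ^ 2 + d = a * c)
    (h2 : (2 : F) ≠ 0) (hc₀ : c ≠ 0) (α β γ δ : F) :
    quaternaryNormForm x m n c α β γ δ =
      binaryNormForm 0 (-c) (α + (x * β + m * δ) / 2) (γ + x * δ / 2 + m * β / (2 * c)) -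
        d / c * binaryNormForm 0 (-c) (β / 2) (δ / 2) := by
  have hn' : a = x ^ 2 - 4 * n := by linear_combination -hn
  have hc' : d = a * c - m ^ 2 := by linear_combination hc
  have hdiv : d / c = a - m ^ 2 / c := by rw [hc']; field_simp
  have h4 : (4 : F) = 2 ^ 2 := by norm_num
  simp only [quaternaryNormForm, binaryNormForm, hdiv]
  field_simp
  rw [hn', h4]
  ring

end Diagonalization

/-! ### The generators of the order -/

section Span

variable {R A : Type*} [CommRing R] [Ring A] [Algebra R A] {x m n c : R} {e₁ e₂ : A}

theorem mul_left_mem_span_of_relations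
    (h₁₁ : e₁ * e₁ = x • e₁ - n • 1) (h₂₂ : e₂ * e₂ = c • 1)
    (h₂₁ : e₂ * e₁ = m • 1 + x • e₂ - e₁ * e₂) {z : A}
    (hz : z ∈ Submodule.span R {1, e₁, e₂, e₁ * e₂}) :
    e₁ * z ∈ Submodule.span R {1, e₁, e₂, e₁ * e₂} ∧
      e₂ * z ∈ Submodule.span R {1, e₁, e₂, e₁ * e₂} := by
  set O := Submodule.span R {1, e₁, e₂, e₁ * e₂} with hO
  have h_one : 1 ∈ O := Submodule.subset_span (by simp)
  have h_fst : e₁ ∈ O := Submodule.subset_span (by simp)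
  have h_snd : e₂ ∈ O := Submodule.subset_span (by simp)
  have h_mul : e₁ * e₂ ∈ O := Submodule.subset_span (by simp)
  have h_left {w : A} (h₁ : w ∈ O) (h₂ : w * e₁ ∈ O) (h₃ : w * e₂ ∈ O)
      (h₄ : w * e₁ * e₂ ∈ O) : w * z ∈ O := by
    have hmap : O.map (LinearMap.mulLeft R w) ≤ O := by
      rw [hO, Submodule.map_span_le]
      simp [← hO, h₁, h₂, h₃, ← mul_assoc, h₄]
    exact hmap (Submodule.mem_map_of_mem hz)
  constructor
  · refine h_left h_fst ?_ h_mul ?_ <;> rw [h₁₁]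
    · exact sub_mem (O.smul_mem _ h_fst) (O.smul_mem _ h_one)
    · rw [sub_mul, smul_mul_assoc, smul_mul_assoc, one_mul]
      exact sub_mem (O.smul_mem _ h_mul) (O.smul_mem _ h_snd)
  · have h₂₁₂ : e₂ * e₁ * e₂ = m • e₂ + (x * c) • 1 - c • e₁ := by
      rw [h₂₁, sub_mul, add_mul, smul_mul_assoc, smul_mul_assoc, one_mul, mul_assoc, h₂₂,
        mul_smul_comm, mul_one, mul_smul]
    refine h_left h_snd ?_ ?_ ?_
    · rw [h₂₁]
      exact sub_mem (add_mem (O.smul_mem _ h_one) (O.smul_mem _ h_snd)) h_mul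
    · rw [h₂₂]
      exact O.smul_mem _ h_one
    · rw [h₂₁₂]
      exact sub_mem (add_mem (O.smul_mem _ h_snd) (O.smul_mem _ h_one)) (O.smul_mem _ h_fst)

theorem mul_mem_span_of_relations
    (h₁₁ : e₁ * e₁ = x • e₁ - n • 1) (h₂₂ : e₂ * e₂ = c • 1)
    (h₂₁ : e₂ * e₁ = m • 1 + x • e₂ - e₁ * e₂) {y z : A}
    (hy : y ∈ Submodule.span R {1, e₁, e₂, e₁ * e₂})
    (hz : z ∈ Submodule.span R {1, e₁, e₂, e₁ * e₂}) :
    y * z ∈ Submodule.span R {1, e₁, e₂, e₁ * e₂} := by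
  have h_left {w : A} (hw : w ∈ Submodule.span R {1, e₁, e₂, e₁ * e₂}) :=
    mul_left_mem_span_of_relations h₁₁ h₂₂ h₂₁ hw
  have hmap : (Submodule.span R {1, e₁, e₂, e₁ * e₂}).map (LinearMap.mulRight R z) ≤
      Submodule.span R {1, e₁, e₂, e₁ * e₂} := by
    rw [Submodule.map_span_le]
    simp [hz, mul_assoc, (h_left hz).1, (h_left hz).2, (h_left (h_left hz).2).1]
  exact hmap (Submodule.mem_map_of_mem hy)

end Span

section Generators

variable {F : Type*} [Field F]

/-- The generator `e₁ = (x + i) / 2`. -/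
def genOne (a d x : F) : ℍ[F,a,-d] :=
  (2 : F)⁻¹ • (algebraMap F ℍ[F,a,-d] x + ⟨0, 1, 0, 0⟩)

/-- The generator `e₂ = (m i + i j) / a`. -/
def genTwo (a d m : F) : ℍ[F,a,-d] :=
  a⁻¹ • (m • (⟨0, 1, 0, 0⟩ : ℍ[F,a,-d]) + ⟨0, 1, 0, 0⟩ * ⟨0, 0, 1, 0⟩)

theorem smul_one_eq_mk {p q : F} (t : F) : t • (1 : ℍ[F,p,q]) = ⟨t, 0, 0, 0⟩ := by
  ext <;> simp

theorem genOne_eq (a d x : F) : genOne a d x = ⟨x / 2, 1 / 2, 0, 0⟩ := by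
  ext <;> simp [genOne, div_eq_inv_mul]

theorem genTwo_eq (a d m : F) : genTwo a d m = ⟨0, m / a, 0, 1 / a⟩ := by
  ext <;> simp [genTwo, div_eq_inv_mul]

variable {a d x m n c : F}

theorem genOne_notMem_range (h2 : (2 : F) ≠ 0) :
    genOne a d x ∉ (algebraMap F ℍ[F,a,-d]).range := by
  rintro ⟨t, ht⟩
  have hI := congrArg QuaternionAlgebra.imI ht
  rw [genOne_eq, QuaternionAlgebra.algebraMap_eq] at hI
  exact one_div_ne_zero h2 hI.symm

theorem genTwo_notMem_range (ha : a ≠ 0) :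
    genTwo a d m ∉ (algebraMap F ℍ[F,a,-d]).range := by
  rintro ⟨t, ht⟩
  have hK := congrArg QuaternionAlgebra.imK ht
  rw [genTwo_eq, QuaternionAlgebra.algebraMap_eq] at hK
  exact one_div_ne_zero ha hK.symm

theorem genOne_mul_genTwo (ha : a ≠ 0) :
    genOne a d x * genTwo a d m = ⟨m / 2, x * m / (2 * a), 1 / 2, x / (2 * a)⟩ := by
  rw [genOne_eq, genTwo_eq, QuaternionAlgebra.mk_mul_mk]
  ext <;> field_simp <;> ring

theorem genOne_mul_self (h2 : (2 : F) ≠ 0) (hn : x ^ 2 - a = 4 * n) :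
    genOne a d x * genOne a d x = x • genOne a d x - n • 1 := by
  obtain rfl : n = (x ^ 2 - a) / 2 ^ 2 := by rw [hn]; field_simp; norm_num
  rw [genOne_eq, smul_one_eq_mk, QuaternionAlgebra.mk_mul_mk, QuaternionAlgebra.smul_mk,
    QuaternionAlgebra.mk_sub_mk]
  ext <;> simp only [smul_eq_mul] <;> field_simp <;> ring

theorem genTwo_mul_self (ha : a ≠ 0) (hc : m ^ 2 + d = a * c) :
    genTwo a d m * genTwo a d m = c • 1 := by
  rw [genTwo_eq, eq_sub_of_add_eq' hc, smul_one_eq_mk, QuaternionAlgebra.mk_mul_mk]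
  ext <;> field_simp <;> ring

theorem genTwo_mul_genOne (h2 : (2 : F) ≠ 0) (ha : a ≠ 0) :
    genTwo a d m * genOne a d x = m • 1 + x • genTwo a d m - genOne a d x * genTwo a d m := by
  rw [genOne_mul_genTwo ha, genOne_eq, genTwo_eq, smul_one_eq_mk, QuaternionAlgebra.mk_mul_mk,
    QuaternionAlgebra.smul_mk, QuaternionAlgebra.mk_add_mk, QuaternionAlgebra.mk_sub_mk]
  ext <;> simp only [smul_eq_mul] <;> field_simp <;> ring

/-- The element `α + βe₁ + γe₂ + δe₁e₂` with the given coordinates. -/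
def genCombination (a d x m α β γ δ : F) : ℍ[F,a,-d] :=
  α • 1 + β • genOne a d x + γ • genTwo a d m + δ • (genOne a d x * genTwo a d m)

theorem genCombination_eq (ha : a ≠ 0) (α β γ δ : F) :
    genCombination a d x m α β γ δ =
      ⟨α + β * x / 2 + δ * m / 2, β / 2 + γ * m / a + δ * x * m / (2 * a), δ / 2,
        γ / a + δ * x / (2 * a)⟩ := by
  rw [genCombination, genOne_mul_genTwo ha, genOne_eq, genTwo_eq, smul_one_eq_mk]
  simp only [QuaternionAlgebra.smul_mk, QuaternionAlgebra.mk_add_mk, smul_eq_mul]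
  ext <;> ring

theorem genCombination_add (α β γ δ α' β' γ' δ' : F) :
    genCombination a d x m (α + α') (β + β') (γ + γ') (δ + δ') =
      genCombination a d x m α β γ δ + genCombination a d x m α' β' γ' δ' := by
  simp only [genCombination]
  module

theorem exists_eq_genCombination (h2 : (2 : F) ≠ 0) (ha : a ≠ 0) (y : ℍ[F,a,-d]) :
    ∃ α β γ δ, y = genCombination a d x m α β γ δ := by
  refine ⟨y.re - (y.imI - m * y.imK) * x - y.imJ * m, 2 * (y.imI - m * y.imK),
    a * y.imK - x * y.imJ, 2 * y.imJ, ?_⟩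
  rw [genCombination_eq ha]
  ext <;> field_simp <;> ring

theorem re_genCombination_mul_star (h2 : (2 : F) ≠ 0) (ha : a ≠ 0) (hn : x ^ 2 - a = 4 * n)
    (hc : m ^ 2 + d = a * c) (α β γ δ : F) :
    (genCombination a d x m α β γ δ * star (genCombination a d x m α β γ δ)).re =
      quaternaryNormForm x m n c α β γ δ := by
  obtain rfl : d = a * c - m ^ 2 := by linear_combination hc
  obtain rfl : n = (x ^ 2 - a) / 2 ^ 2 := by rw [hn]; field_simp; norm_num
  rw [genCombination_eq ha, QuaternionAlgebra.star_mk, QuaternionAlgebra.mk_mul_mk]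
  simp only [quaternaryNormForm, binaryNormForm]
  field_simp
  ring

end Generators

/-! ### Local integrality of the coordinates -/

section Arithmetic

theorem map_sq_sub_eq_four_mul {R S : Type*} [CommRing R] [CommRing S] (f : R →+* S) {a x n : R}
    (hn : x ^ 2 - a = 4 * n) : f x ^ 2 - f a = 4 * f n := by
  rw [← map_pow, ← map_sub, hn, map_mul, map_ofNat]

theorem map_sq_add_eq_mul {R S : Type*} [CommRing R] [CommRing S] (f : R →+* S) {a d m c : R}
    (hc : m ^ 2 + d = a * c) : f m ^ 2 + f d = f a * f c := by
  rw [← map_pow, ← map_add, hc, map_mul]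

theorem notMem_or_two_notMem_and_notMem {R : Type*} [CommRing R] {P : Ideal R} [hP : P.IsPrime]
    {a d x m n c : R} (hn : x ^ 2 - a = 4 * n) (hc : m ^ 2 + d = a * c) (hd : d ∈ P)
    (hd₂ : d ∉ P ^ 2) : a ∉ P ∨ 2 ∉ P ∧ c ∉ P := by
  refine or_iff_not_imp_left.2 fun ha => ?_
  rw [not_not] at ha
  have h_sq {y z : R} (hy : y ∈ P) (hz : z ∈ P) : y * z ∈ P ^ 2 := sq P ▸ Ideal.mul_mem_mul hy hz
  have hm : m ∈ P := by
    refine hP.mem_of_pow_mem 2 ?_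
    rw [eq_sub_of_add_eq hc]
    exact sub_mem (P.mul_mem_right c ha) hd
  have hac : a * c ∉ P ^ 2 := fun h => hd₂ <| by
    rw [eq_sub_of_add_eq' hc, sq m]
    exact sub_mem h (h_sq hm hm)
  refine ⟨fun h2 => hac (Ideal.mul_mem_right _ _ ?_), fun h => hac (h_sq ha h)⟩
  have h4n : 4 * n ∈ P ^ 2 := by
    rw [show 4 * n = 2 * 2 * n by ring]
    exact Ideal.mul_mem_right _ _ (h_sq h2 h2)
  have hx : x ∈ P := by
    refine hP.mem_of_pow_mem 2 ?_
    rw [sub_eq_iff_eq_add.1 hn]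
    exact add_mem (Ideal.pow_le_self two_ne_zero h4n) ha
  rw [← sub_sub_cancel (x ^ 2) a, hn, sq x]
  exact sub_mem (h_sq hx hx) h4n

variable {R K : Type*} [CommRing R] [IsDedekindDomain R] [Field K] [Algebra R K]
  [IsFractionRing R K]

theorem notMem_asIdeal_sq_of_squarefree {d : R} (hd : Squarefree (Ideal.span {d}))
    (v : HeightOneSpectrum R) : d ∉ v.asIdeal ^ 2 := fun h =>
  v.prime.not_isUnit (hd _ (by rwa [← sq, Ideal.dvd_span_singleton]))

theorem valuation_eq_exp_neg_one (v : HeightOneSpectrum R) {d : R} (hd : d ∈ v.asIdeal)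
    (hd₂ : d ∉ v.asIdeal ^ 2) : v.valuation K (algebraMap R K d) = WithZero.exp (-1) := by
  rw [v.valuation_of_algebraMap]
  refine le_antisymm ((v.intValuation_le_pow_iff_mem d 1).2 (by rwa [pow_one]))
    ((v.exp_le_intValuation_iff_emultiplicity_le (n := 1)).2 (Order.le_of_lt_add_one ?_))
  rw [← Ideal.dvd_span_singleton] at hd₂
  exact emultiplicity_lt_iff_not_dvd.2 hd₂

end Arithmetic

section Completion

variable {R K : Type*} [CommRing R] [IsDedekindDomain R] [Field K] [Algebra R K]
  [IsFractionRing R K] (v : HeightOneSpectrum R)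

theorem one_le_valuation_binaryNormForm {A : Type*} [Ring A] [Algebra (v.adicCompletion K) A]
    (hA : IsDivisionRingPred A) {b e : K} {θ : A}
    (hθ : θ ∉ (algebraMap (v.adicCompletion K) A).range)
    (hroot : θ * θ = algebraMap K (v.adicCompletion K) b • θ -
      algebraMap K (v.adicCompletion K) e • 1)
    (hb : v.valuation K b ≤ 1) (he : v.valuation K e ≤ 1)
    (hdisc : v.valuation K (b ^ 2 - 4 * e) = 1) {r : K} (hr : v.valuation K r ≤ 1) :
    1 ≤ v.valuation K (binaryNormForm b e r 1) := by
  have hv (k : K) : Valued.v (algebraMap K (v.adicCompletion K) k) = v.valuation K k :=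
    v.valuedAdicCompletion_eq_valuation' k
  by_contra! hlt
  obtain ⟨t, ht⟩ : ∃ t, binaryNormForm (algebraMap K (v.adicCompletion K) b)
      (algebraMap K (v.adicCompletion K) e) t 1 = 0 := by
    refine exists_binaryNormForm_eq_zero_of_valuation_lt_one (r := algebraMap K _ r) ?_ ?_ ?_ ?_ ?_
    · rwa [hv]
    · rwa [hv]
    · rwa [hv]
    · rw [← hdisc, ← hv, map_sub (algebraMap K _), map_pow (algebraMap K _),
        map_mul (algebraMap K _), map_ofNat]
    · rwa [← hv, map_binaryNormForm, map_one] at hlt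
  exact hA.binaryNormForm_ne_zero hθ hroot t ht

end Completion

section ValuedCoordinates

variable {F : Type*} [Field F] {v : Valuation F ℤᵐ⁰} {a d x m n c α β γ δ : F}

theorem div_mem_integer {p q : F} (hp : p ∈ v.integer) (hq : v q = 1) : p / q ∈ v.integer := by
  rwa [Valuation.mem_integer_iff, map_div₀, hq, div_one]

theorem coordinates_mem_integer_of_a_unit (hn : x ^ 2 - a = 4 * n) (hc : m ^ 2 + d = a * c)
    (hx : x ∈ v.integer) (hm : m ∈ v.integer) (hn' : n ∈ v.integer) (ha : v a = 1)
    (hd : v d = WithZero.exp (-1))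
    (hroot : ∀ r, v r ≤ 1 → 1 ≤ v (binaryNormForm x n r 1))
    (hQ : quaternaryNormForm x m n c α β γ δ ∈ v.integer) :
    α ∈ v.integer ∧ β ∈ v.integer ∧ γ ∈ v.integer ∧ δ ∈ v.integer := by
  have ha₀ : a ≠ 0 := by rintro rfl; simp at ha
  rw [Valuation.mem_integer_iff, quaternaryNormForm_eq_of_a_ne_zero hn hc ha₀] at hQ
  obtain ⟨hst, hγδ⟩ := le_one_of_valuation_sub_le_one v (by rw [map_div₀, ha, div_one, hd])
    (valuation_binaryNormForm v hx hn' hroot _ _) (valuation_binaryNormForm v hx hn' hroot _ _) hQ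
  obtain ⟨hs, ht⟩ := max_le_iff.1 hst
  obtain ⟨hγ, hδ⟩ : γ ∈ v.integer ∧ δ ∈ v.integer := max_le_iff.1 hγδ
  have h2 : (2 : F) ∈ v.integer := ofNat_mem _ 2
  refine ⟨?_, ?_, hγ, hδ⟩
  · rw [← sub_add_cancel α (m * (x * γ + 2 * n * δ) / a)]
    exact add_mem hs (div_mem_integer (mul_mem hm (add_mem (mul_mem hx hγ)
      (mul_mem (mul_mem h2 hn') hδ))) ha)
  · rw [← add_sub_cancel_right β (m * (2 * γ + x * δ) / a)]
    exact sub_mem ht (div_mem_integer (mul_mem hm (add_mem (mul_mem h2 hγ) (mul_mem hx hδ))) ha)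

theorem coordinates_mem_integer_of_c_unit (hn : x ^ 2 - a = 4 * n) (hc : m ^ 2 + d = a * c)
    (hx : x ∈ v.integer) (hm : m ∈ v.integer) (h2 : v 2 = 1) (hc' : v c = 1)
    (hd : v d = WithZero.exp (-1))
    (hroot : ∀ r, v r ≤ 1 → 1 ≤ v (binaryNormForm 0 (-c) r 1))
    (hQ : quaternaryNormForm x m n c α β γ δ ∈ v.integer) :
    α ∈ v.integer ∧ β ∈ v.integer ∧ γ ∈ v.integer ∧ δ ∈ v.integer := by
  have h2₀ : (2 : F) ≠ 0 := v.ne_zero_iff.1 (h2 ▸ one_ne_zero)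
  have hc₀ : c ≠ 0 := v.ne_zero_iff.1 (hc' ▸ one_ne_zero)
  have hform (s t : F) : v (binaryNormForm 0 (-c) s t) = max (v s) (v t) ^ 2 :=
    valuation_binaryNormForm v (by simp) (by rw [Valuation.map_neg, hc']) hroot s t
  rw [Valuation.mem_integer_iff, quaternaryNormForm_eq_of_c_ne_zero hn hc h2₀ hc₀] at hQ
  obtain ⟨hst, hβδ⟩ := le_one_of_valuation_sub_le_one v (by rw [map_div₀, hc', div_one, hd])
    (hform _ _) (hform _ _) hQ
  obtain ⟨hs, ht⟩ := max_le_iff.1 hst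
  obtain ⟨hβ, hδ⟩ : β ∈ v.integer ∧ δ ∈ v.integer := by
    simpa only [map_div₀, h2, div_one, max_le_iff, Valuation.mem_integer_iff] using hβδ
  refine ⟨?_, hβ, ?_, hδ⟩
  · rw [← add_sub_cancel_right α ((x * β + m * δ) / 2)]
    exact sub_mem hs (div_mem_integer (add_mem (mul_mem hx hβ) (mul_mem hm hδ)) h2)
  · have h2c : v (2 * c) = 1 := by rw [map_mul, h2, hc', one_mul]
    rw [← add_sub_cancel_right γ (x * δ / 2 + m * β / (2 * c)), ← add_assoc]
    exact sub_mem ht (add_mem (div_mem_integer (mul_mem hx hδ) h2)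
      (div_mem_integer (mul_mem hm hβ) h2c))

end ValuedCoordinates

section Local

variable {R K : Type*} [CommRing R] [IsDedekindDomain R] [Field K] [Algebra R K]
  [IsFractionRing R K]

/-- The quaternion algebra `ℍ[K,a,b]` is ramified at `v`, i.e. its completion at `v` is a division
ring. -/
def IsRamifiedAt (v : HeightOneSpectrum R) (a b : K) : Prop :=
  IsDivisionRingPred
    ℍ[v.adicCompletion K,algebraMap K (v.adicCompletion K) a,algebraMap K (v.adicCompletion K) b]

section Ramified

variable {v : HeightOneSpectrum R} {a d x m n c : K}

theorem one_le_valuation_binaryNormForm_of_a_unit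
    (hA : IsRamifiedAt v a (-d)) (h2 : (2 : K) ≠ 0) (hn : x ^ 2 - a = 4 * n)
    (hx : v.valuation K x ≤ 1) (hn' : v.valuation K n ≤ 1) (ha : v.valuation K a = 1)
    {r : K} (hr : v.valuation K r ≤ 1) :
    1 ≤ v.valuation K (binaryNormForm x n r 1) := by
  rw [IsRamifiedAt, map_neg] at hA
  have h2' : (2 : v.adicCompletion K) ≠ 0 := by
    rw [← map_ofNat (algebraMap K (v.adicCompletion K))]
    exact (map_ne_zero _).2 h2
  have hroot := genOne_mul_self (d := algebraMap K (v.adicCompletion K) d) h2'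
    (map_sq_sub_eq_four_mul (algebraMap K _) hn)
  refine one_le_valuation_binaryNormForm v hA (genOne_notMem_range h2') hroot hx hn' ?_ hr
  rw [← hn, sub_sub_cancel, ha]

theorem one_le_valuation_binaryNormForm_of_c_unit
    (hA : IsRamifiedAt v a (-d)) (ha : a ≠ 0) (hc : m ^ 2 + d = a * c) (h2 : v.valuation K 2 = 1)
    (hc' : v.valuation K c = 1) {r : K} (hr : v.valuation K r ≤ 1) :
    1 ≤ v.valuation K (binaryNormForm 0 (-c) r 1) := by
  rw [IsRamifiedAt, map_neg] at hA
  have ha' : algebraMap K (v.adicCompletion K) a ≠ 0 := (map_ne_zero _).2 ha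
  have hsq := genTwo_mul_self ha' (map_sq_add_eq_mul (algebraMap K _) hc)
  refine one_le_valuation_binaryNormForm v hA (genTwo_notMem_range ha')
    (by rw [hsq, map_zero, zero_smul, map_neg, neg_smul, zero_sub, neg_neg]) ?_ ?_ ?_ hr
  · simp
  · rw [Valuation.map_neg, hc']
  · rw [show (0 : K) ^ 2 - 4 * -c = 2 ^ 2 * c by ring, map_mul, map_pow, h2, hc', one_pow, one_mul]

end Ramified

variable {a d x m n c : R}

theorem coordinates_mem_integer_of_mem {v : HeightOneSpectrum R}
    (hA : IsRamifiedAt v (algebraMap R K a) (-(algebraMap R K d)))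
    (h2 : (2 : K) ≠ 0) (ha : a ≠ 0) (hn : x ^ 2 - a = 4 * n) (hc : m ^ 2 + d = a * c)
    (hd : d ∈ v.asIdeal) (hd₂ : d ∉ v.asIdeal ^ 2) {α β γ δ : K}
    (hQ : quaternaryNormForm (algebraMap R K x) (algebraMap R K m) (algebraMap R K n)
      (algebraMap R K c) α β γ δ ∈ (v.valuation K).integer) :
    α ∈ (v.valuation K).integer ∧ β ∈ (v.valuation K).integer ∧ γ ∈ (v.valuation K).integer ∧
      δ ∈ (v.valuation K).integer := by
  have hint (r : R) : algebraMap R K r ∈ (v.valuation K).integer := v.valuation_le_one r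
  have hunit {r : R} (hr : r ∉ v.asIdeal) : v.valuation K (algebraMap R K r) = 1 :=
    v.valuation_eq_one_iff_notMem.2 hr
  have hn' := map_sq_sub_eq_four_mul (algebraMap R K) hn
  have hc' := map_sq_add_eq_mul (algebraMap R K) hc
  have hdv : v.valuation K (algebraMap R K d) = WithZero.exp (-1) :=
    valuation_eq_exp_neg_one v hd hd₂
  obtain hav | ⟨h2v, hcv⟩ := notMem_or_two_notMem_and_notMem hn hc hd hd₂
  · exact coordinates_mem_integer_of_a_unit hn' hc' (hint x) (hint m) (hint n) (hunit hav) hdv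
      (fun r =>
        one_le_valuation_binaryNormForm_of_a_unit hA h2 hn' (hint x) (hint n) (hunit hav)) hQ
  · have h2v' : v.valuation K 2 = 1 := by rw [← map_ofNat (algebraMap R K) 2, hunit h2v]
    have ha' : algebraMap R K a ≠ 0 := by simpa using ha
    exact coordinates_mem_integer_of_c_unit hn' hc' (hint x) (hint m) h2v' (hunit hcv) hdv
      (fun r => one_le_valuation_binaryNormForm_of_c_unit hA ha' hc' h2v' (hunit hcv)) hQ

theorem mem_integer_of_mul_mem_range {v : HeightOneSpectrum R} (hd : d ∉ v.asIdeal) {t : K}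
    (ht : algebraMap R K d * t ∈ (algebraMap R K).range) : t ∈ (v.valuation K).integer := by
  obtain ⟨r, hr⟩ := ht
  have hle : v.valuation K (algebraMap R K r) ≤ 1 := v.valuation_le_one r
  rwa [hr, map_mul, v.valuation_eq_one_iff_notMem.2 hd, one_mul] at hle

theorem coordinates_mem_range (hsqfree : Squarefree (Ideal.span {d}))
    (hram : ∀ v : HeightOneSpectrum R, v.asIdeal ∣ Ideal.span {d} →
      IsRamifiedAt v (algebraMap R K a) (-(algebraMap R K d)))
    (h2 : (2 : K) ≠ 0) (ha : a ≠ 0) (hn : x ^ 2 - a = 4 * n) (hc : m ^ 2 + d = a * c)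
    {α β γ δ : K}
    (hQ : quaternaryNormForm (algebraMap R K x) (algebraMap R K m) (algebraMap R K n)
      (algebraMap R K c) α β γ δ ∈ (algebraMap R K).range)
    (hdual : algebraMap R K d * α ∈ (algebraMap R K).range ∧
      algebraMap R K d * β ∈ (algebraMap R K).range ∧
      algebraMap R K d * γ ∈ (algebraMap R K).range ∧
      algebraMap R K d * δ ∈ (algebraMap R K).range) :
    α ∈ (algebraMap R K).range ∧ β ∈ (algebraMap R K).range ∧ γ ∈ (algebraMap R K).range ∧
      δ ∈ (algebraMap R K).range := by
  have hloc (v : HeightOneSpectrum R) : α ∈ (v.valuation K).integer ∧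
      β ∈ (v.valuation K).integer ∧ γ ∈ (v.valuation K).integer ∧
      δ ∈ (v.valuation K).integer := by
    by_cases hv : d ∈ v.asIdeal
    · obtain ⟨r, hr⟩ := hQ
      refine coordinates_mem_integer_of_mem (hram v (Ideal.dvd_span_singleton.2 hv)) h2 ha hn hc
        hv (notMem_asIdeal_sq_of_squarefree hsqfree v) ?_
      exact hr ▸ v.valuation_le_one r
    · obtain ⟨hα, hβ, hγ, hδ⟩ := hdual
      exact ⟨mem_integer_of_mul_mem_range hv hα, mem_integer_of_mul_mem_range hv hβ,
        mem_integer_of_mul_mem_range hv hγ, mem_integer_of_mul_mem_range hv hδ⟩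
  have hglob {t : K} (ht : ∀ v : HeightOneSpectrum R, t ∈ (v.valuation K).integer) :
      t ∈ (algebraMap R K).range :=
    HeightOneSpectrum.mem_integers_of_valuation_le_one K t ht
  exact ⟨hglob fun v => (hloc v).1, hglob fun v => (hloc v).2.1, hglob fun v => (hloc v).2.2.1,
    hglob fun v => (hloc v).2.2.2⟩

end Local

/-! ### The order and its maximality -/

section Order

variable {R K : Type*} [CommRing R] [Field K] [Algebra R K] {a d x m n c : R}

variable (K) in
/-- The span `O` of `1, e₁, e₂, e₁e₂` over `R`, where `e₁ = (x + i) / 2` and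
`e₂ = (m i + i j) / a`. -/
def quaternionOrder (a d x m : R) : Submodule R ℍ[K,algebraMap R K a,-(algebraMap R K d)] :=
  let e₁ := genOne (algebraMap R K a) (algebraMap R K d) (algebraMap R K x)
  let e₂ := genTwo (algebraMap R K a) (algebraMap R K d) (algebraMap R K m)
  Submodule.span R {1, e₁, e₂, e₁ * e₂}

theorem one_mem_quaternionOrder : 1 ∈ quaternionOrder K a d x m :=
  Submodule.subset_span (by simp)

theorem genOne_mem_quaternionOrder :
    genOne (algebraMap R K a) (algebraMap R K d) (algebraMap R K x) ∈ quaternionOrder K a d x m :=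
  Submodule.subset_span (by simp)

theorem genTwo_mem_quaternionOrder :
    genTwo (algebraMap R K a) (algebraMap R K d) (algebraMap R K m) ∈ quaternionOrder K a d x m :=
  Submodule.subset_span (by simp)

theorem genOne_mul_genTwo_mem_quaternionOrder :
    genOne (algebraMap R K a) (algebraMap R K d) (algebraMap R K x) *
      genTwo (algebraMap R K a) (algebraMap R K d) (algebraMap R K m) ∈ quaternionOrder K a d x m :=
  Submodule.subset_span (by simp)

theorem algebraMap_mem_quaternionOrder (r : R) :
    algebraMap R ℍ[K,algebraMap R K a,-(algebraMap R K d)] r ∈ quaternionOrder K a d x m := by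
  have h := Submodule.smul_mem (quaternionOrder K a d x m) r one_mem_quaternionOrder
  rwa [← Algebra.algebraMap_eq_smul_one] at h

theorem quaternionOrder_fg : (quaternionOrder K a d x m).FG :=
  Submodule.fg_span (Set.toFinite _)

theorem mul_mem_quaternionOrder (h2 : (2 : K) ≠ 0) (ha : algebraMap R K a ≠ 0)
    (hn : x ^ 2 - a = 4 * n) (hc : m ^ 2 + d = a * c)
    {y z : ℍ[K,algebraMap R K a,-(algebraMap R K d)]} (hy : y ∈ quaternionOrder K a d x m)
    (hz : z ∈ quaternionOrder K a d x m) : y * z ∈ quaternionOrder K a d x m := by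
  refine mul_mem_span_of_relations (x := x) (m := m) (n := n) (c := c) ?_ ?_ ?_ hy hz
  · simpa only [algebraMap_smul] using
      genOne_mul_self h2 (map_sq_sub_eq_four_mul (algebraMap R K) hn)
  · simpa only [algebraMap_smul] using
      genTwo_mul_self ha (map_sq_add_eq_mul (algebraMap R K) hc)
  · simpa only [algebraMap_smul] using
      genTwo_mul_genOne (d := algebraMap R K d) (x := algebraMap R K x) (m := algebraMap R K m)
        h2 ha

theorem span_quaternionOrder_eq_top (h2 : (2 : K) ≠ 0) (ha : algebraMap R K a ≠ 0) :
    Submodule.span K (SetLike.coe (quaternionOrder K a d x m)) = ⊤ := by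
  refine Submodule.eq_top_iff'.2 fun y => ?_
  obtain ⟨α, β, γ, δ, rfl⟩ :=
    exists_eq_genCombination (x := algebraMap R K x) (m := algebraMap R K m) h2 ha y
  have hmem {t : K} {z} (hz : z ∈ quaternionOrder K a d x m) :
      t • z ∈ Submodule.span K (SetLike.coe (quaternionOrder K a d x m)) :=
    Submodule.smul_mem _ t (Submodule.subset_span hz)
  exact add_mem (add_mem (add_mem (hmem one_mem_quaternionOrder)
    (hmem genOne_mem_quaternionOrder)) (hmem genTwo_mem_quaternionOrder))
    (hmem genOne_mul_genTwo_mem_quaternionOrder)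

theorem genCombination_mem_quaternionOrder (α β γ δ : R) :
    genCombination (algebraMap R K a) (algebraMap R K d) (algebraMap R K x) (algebraMap R K m)
      (algebraMap R K α) (algebraMap R K β) (algebraMap R K γ) (algebraMap R K δ) ∈
      quaternionOrder K a d x m := by
  simp only [genCombination, algebraMap_smul]
  exact add_mem (add_mem (add_mem (Submodule.smul_mem _ α one_mem_quaternionOrder)
    (Submodule.smul_mem _ β genOne_mem_quaternionOrder))
    (Submodule.smul_mem _ γ genTwo_mem_quaternionOrder))
    (Submodule.smul_mem _ δ genOne_mul_genTwo_mem_quaternionOrder)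

variable [IsIntegrallyClosed R] [IsFractionRing R K]

theorem quaternaryNormForm_mem_range_of_isIntegral (h2 : (2 : K) ≠ 0)
    (ha : algebraMap R K a ≠ 0) (hn : x ^ 2 - a = 4 * n) (hc : m ^ 2 + d = a * c) {α β γ δ : K}
    (hy : IsIntegral R (genCombination (algebraMap R K a) (algebraMap R K d) (algebraMap R K x)
      (algebraMap R K m) α β γ δ)) :
    quaternaryNormForm (algebraMap R K x) (algebraMap R K m) (algebraMap R K n)
      (algebraMap R K c) α β γ δ ∈ (algebraMap R K).range := by
  rw [← re_genCombination_mul_star h2 ha (map_sq_sub_eq_four_mul _ hn) (map_sq_add_eq_mul _ hc)]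
  exact IsIntegrallyClosed.isIntegral_iff.1 (isIntegral_re_mul_star hy)

theorem mul_coordinates_mem_range (h2 : (2 : K) ≠ 0) (ha : algebraMap R K a ≠ 0)
    (hn : x ^ 2 - a = 4 * n) (hc : m ^ 2 + d = a * c)
    (O' : Subalgebra R ℍ[K,algebraMap R K a,-(algebraMap R K d)])
    (hO' : ∀ y ∈ O', IsIntegral R y)
    (hle : quaternionOrder K a d x m ≤ Subalgebra.toSubmodule O') {α β γ δ : K}
    (hy : genCombination (algebraMap R K a) (algebraMap R K d) (algebraMap R K x)
      (algebraMap R K m) α β γ δ ∈ O') :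
    algebraMap R K d * α ∈ (algebraMap R K).range ∧
      algebraMap R K d * β ∈ (algebraMap R K).range ∧
      algebraMap R K d * γ ∈ (algebraMap R K).range ∧
      algebraMap R K d * δ ∈ (algebraMap R K).range := by
  have hform (α β γ δ : K) (hz : genCombination (algebraMap R K a) (algebraMap R K d)
      (algebraMap R K x) (algebraMap R K m) α β γ δ ∈ O') :=
    quaternaryNormForm_mem_range_of_isIntegral h2 ha hn hc (hO' _ hz)
  have hform_add (p q r s : R) := hform (α + algebraMap R K p) (β + algebraMap R K q)
    (γ + algebraMap R K r) (δ + algebraMap R K s) (by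
      rw [genCombination_add]
      exact add_mem hy (hle (genCombination_mem_quaternionOrder p q r s)))
  refine mul_coordinates_mem_of_quaternaryNormForm_mem (map_sq_sub_eq_four_mul _ hn)
    (map_sq_add_eq_mul _ hc) ⟨x, rfl⟩ ⟨m, rfl⟩ ⟨n, rfl⟩ ⟨c, rfl⟩ (hform _ _ _ _ hy) ?_ ?_ ?_ ?_
  · simpa using hform_add 1 0 0 0
  · simpa using hform_add 0 1 0 0
  · simpa using hform_add 0 0 1 0
  · simpa using hform_add 0 0 0 1

end Order

section Maximality

variable {R K : Type*} [CommRing R] [IsDedekindDomain R] [Field K] [Algebra R K]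
  [IsFractionRing R K] {a d x m n c : R}

theorem toSubmodule_eq_quaternionOrder (hsqfree : Squarefree (Ideal.span {d}))
    (hram : ∀ v : HeightOneSpectrum R, v.asIdeal ∣ Ideal.span {d} →
      IsRamifiedAt v (algebraMap R K a) (-(algebraMap R K d)))
    (h2 : (2 : K) ≠ 0) (ha : a ≠ 0) (hn : x ^ 2 - a = 4 * n) (hc : m ^ 2 + d = a * c)
    (O' : Subalgebra R ℍ[K,algebraMap R K a,-(algebraMap R K d)])
    (hO' : ∀ y ∈ O', IsIntegral R y)
    (hle : quaternionOrder K a d x m ≤ Subalgebra.toSubmodule O') :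
    Subalgebra.toSubmodule O' = quaternionOrder K a d x m := by
  have ha' : algebraMap R K a ≠ 0 := by simpa using ha
  refine le_antisymm (fun y hy => ?_) hle
  obtain ⟨α, β, γ, δ, rfl⟩ :=
    exists_eq_genCombination (x := algebraMap R K x) (m := algebraMap R K m) h2 ha' y
  obtain ⟨⟨α, rfl⟩, ⟨β, rfl⟩, ⟨γ, rfl⟩, ⟨δ, rfl⟩⟩ := coordinates_mem_range hsqfree hram h2 ha hn hc
    (quaternaryNormForm_mem_range_of_isIntegral h2 ha' hn hc (hO' _ hy))
    (mul_coordinates_mem_range h2 ha' hn hc O' hO' hle hy)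
  exact genCombination_mem_quaternionOrder α β γ δ

end Maximality

theorem stmt_19_general {R K : Type*} [CommRing R] [IsDedekindDomain R] [Field K] [Algebra R K]
    [IsFractionRing R K] (h2 : (2 : K) ≠ 0) {a d x m : R} (ha : a ≠ 0) (hx : 4 ∣ x ^ 2 - a)
    (hm : a ∣ m ^ 2 + d) (hsqfree : Squarefree (Ideal.span {d}))
    (hram : ∀ v : HeightOneSpectrum R, v.asIdeal ∣ Ideal.span {d} →
      IsRamifiedAt v (algebraMap R K a) (-(algebraMap R K d))) :
    let A := ℍ[K,algebraMap R K a,-(algebraMap R K d)]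
    let O := quaternionOrder K a d x m
    (1 : A) ∈ O ∧
    (∀ y ∈ O, ∀ z ∈ O, y * z ∈ O) ∧
    (∀ r : R, algebraMap R A r ∈ O) ∧
    O.FG ∧
    Submodule.span K (O : Set A) = ⊤ ∧
    ∀ O' : Subalgebra R A, (O : Set A) ⊆ (O' : Set A) →
      (Subalgebra.toSubmodule O').FG → Subalgebra.toSubmodule O' = O := by
  obtain ⟨n, hn⟩ := hx
  obtain ⟨c, hc⟩ := hm
  have ha' : algebraMap R K a ≠ 0 := by simpa using ha
  exact ⟨one_mem_quaternionOrder, fun y hy z hz => mul_mem_quaternionOrder h2 ha' hn hc hy hz,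
    algebraMap_mem_quaternionOrder, quaternionOrder_fg, span_quaternionOrder_eq_top h2 ha',
    fun O' hle hfg => toSubmodule_eq_quaternionOrder hsqfree hram h2 ha hn hc O'
      (fun y hy => IsIntegral.of_mem_of_fg O' hfg y hy) hle⟩

theorem stmt_19 (K : Type*) [Field K] [NumberField K]
    (a d : 𝓞 K) (ha : a ≠ 0) (hd : d ≠ 0)
    (x m : 𝓞 K) (hx : (4 : 𝓞 K) ∣ x ^ 2 - a) (hm : a ∣ m ^ 2 + d)
    (hsqfree : Squarefree (Ideal.span {d} : Ideal (𝓞 K)))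
    (hram : ∀ v : HeightOneSpectrum (𝓞 K),
      IsDivisionRingPred ℍ[v.adicCompletion K,
          algebraMap K (v.adicCompletion K) (algebraMap (𝓞 K) K a),
          algebraMap K (v.adicCompletion K) (-(algebraMap (𝓞 K) K d))] ↔
        v.asIdeal ∣ Ideal.span {d}) :
    let A := ℍ[K, algebraMap (𝓞 K) K a, -(algebraMap (𝓞 K) K d)]
    let qi : A := ⟨0, 1, 0, 0⟩
    let qj : A := ⟨0, 0, 1, 0⟩
    let e₁ : A := (2 : K)⁻¹ • (algebraMap K A (algebraMap (𝓞 K) K x) + qi)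
    let e₂ : A := (algebraMap (𝓞 K) K a)⁻¹ • ((algebraMap (𝓞 K) K m) • qi + qi * qj)
    let O : Submodule (𝓞 K) A := Submodule.span (𝓞 K) {1, e₁, e₂, e₁ * e₂}
    (1 : A) ∈ O ∧
    (∀ y ∈ O, ∀ z ∈ O, y * z ∈ O) ∧
    (∀ r : 𝓞 K, algebraMap (𝓞 K) A r ∈ O) ∧
    O.FG ∧
    Submodule.span K (O : Set A) = ⊤ ∧
    (∀ O' : Subalgebra (𝓞 K) A, (O : Set A) ⊆ (O' : Set A) →
      (Subalgebra.toSubmodule O').FG → Subalgebra.toSubmodule O' = O) :=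
  stmt_19_general two_ne_zero ha hx hm hsqfree fun v => (hram v).2
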